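/- Let T be a set of four affinely independent points in ℕ_0^3. Then for every α ∈ T there exists a point β ∈ E_2^∞(T) with β ≠ α such that all three coordinates of β − α are positive integers. -/

import Mathlib

open MeasureTheory
open scoped Classical ENNReal

noncomputable section

/-- The `d`-dimensional torus, modelled as `d` copies of `ℝ/ℤ`,
whose product `volume` measure is the normalized Haar measure. -/
abbrev Torus (d : ℕ) := Fin d → AddCircle (1 : ℝ)

/-- The character `z ↦ z^α` on the torus. -/
def torusChar {d : ℕ} (α : Fin d → ℤ) (x : Torus d) : ℂ :=
  ∏ j, fourier (α j) (x j)

/-- The trigonometric polynomial with frequencies in `F` and coefficients `a`. -/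
def trigPoly {d : ℕ} (F : Finset (Fin d → ℤ)) (a : (Fin d → ℤ) → ℂ) (x : Torus d) : ℂ :=
  ∑ α ∈ F, a α * torusChar α x

/-- The set `ℕ₀^d` of multi-indices with nonnegative entries. -/
def NN (d : ℕ) : Set (Fin d → ℤ) := {α | ∀ j, 0 ≤ α j}

/-- `Λ` is a coset in `ℤ^d`, i.e. a translate of a subgroup. -/
def IsCoset {d : ℕ} (Λ : Set (Fin d → ℤ)) : Prop :=
  ∃ (x : Fin d → ℤ) (H : AddSubgroup (Fin d → ℤ)),
    Λ = (x + ·) '' (H : Set (Fin d → ℤ))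

/-- `Λ` is a contractive projection set for `L^p(𝕋^d)`:
the projection onto frequencies in `Λ` is contractive on trigonometric polynomials. -/
def IsContractiveLp (d : ℕ) (p : ℝ≥0∞) (Λ : Set (Fin d → ℤ)) : Prop :=
  ∀ (F : Finset (Fin d → ℤ)) (a : (Fin d → ℤ) → ℂ),
    eLpNorm (trigPoly (F.filter (· ∈ Λ)) a) p volume ≤ eLpNorm (trigPoly F a) p volume

/-- `Γ` is a contractive projection set for `H^p(𝕋^d)`:
the projection onto frequencies in `Γ` is contractive on analytic polynomials. -/
def IsContractiveHp (d : ℕ) (p : ℝ≥0∞) (Γ : Set (Fin d → ℤ)) : Prop :=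
  ∀ F : Finset (Fin d → ℤ), ↑F ⊆ NN d → ∀ a : (Fin d → ℤ) → ℂ,
    eLpNorm (trigPoly (F.filter (· ∈ Γ)) a) p volume ≤ eLpNorm (trigPoly F a) p volume

/-- `Γ` has dimension `k`: the subgroup generated by the differences `γ - γ₀` has rank `k`. -/
def HasDim {d : ℕ} (Γ : Set (Fin d → ℤ)) (k : ℕ) : Prop :=
  ∀ γ₀ ∈ Γ, Module.finrank ℤ (Submodule.span ℤ ((· - γ₀) '' Γ)) = k

/-- `H^p(𝕋^d)` enjoys the contractive restriction property of dimension `k`: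
every `k`-dimensional contractive projection set for `H^p(𝕋^d)` is the restriction
of a coset in `ℤ^d` to `ℕ₀^d`. -/
def ContractiveRestrictionProperty (d : ℕ) (p : ℝ≥0∞) (k : ℕ) : Prop :=
  ∀ Γ : Set (Fin d → ℤ), Γ.Nonempty → Γ ⊆ NN d → HasDim Γ k → IsContractiveHp d p Γ →
    ∃ Λ : Set (Fin d → ℤ), IsCoset Λ ∧ Γ = Λ ∩ NN d

/-- The coset `Λ(Γ)` in `ℤ^d` generated by `Γ`. -/
def cosetGen {d : ℕ} (Γ : Set (Fin d → ℤ)) : Set (Fin d → ℤ) :=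
  ⋃ γ₀ ∈ Γ, (γ₀ + ·) '' (AddSubgroup.closure ((· - γ₀) '' Γ) : Set (Fin d → ℤ))

/-- The `n`-extension `E_n(Γ)`: all points of `Λ(Γ) ∩ ℕ₀^d` at distance at most `n` from `Γ`. -/
def Eext {d : ℕ} (n : ℕ) (Γ : Set (Fin d → ℤ)) : Set (Fin d → ℤ) :=
  {lam | lam ∈ cosetGen Γ ∩ NN d ∧ ∃ γ ∈ Γ, ∃ m : (Fin d → ℤ) →₀ ℤ,
    (↑m.support : Set (Fin d → ℤ)) ⊆ Γ \ {γ} ∧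
    lam = γ + ∑ α ∈ m.support, m α • (α - γ) ∧
    (∑ α ∈ m.support, max (m α) 0) ≤ (n : ℤ) ∧
    (∑ α ∈ m.support, max (-(m α)) 0) ≤ (n : ℤ)}

/-- Iterated `n`-extensions `E_n^k(Γ)`. -/
def EextIter {d : ℕ} (n : ℕ) : ℕ → Set (Fin d → ℤ) → Set (Fin d → ℤ)
  | 0, Γ => Eext n Γ
  | (k + 1), Γ => Eext n (EextIter n k Γ)

/-- The `n`-completion `E_n^∞(Γ)`. -/
def EextInf {d : ℕ} (n : ℕ) (Γ : Set (Fin d → ℤ)) : Set (Fin d → ℤ) :=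
  ⋃ k, EextIter n k Γ

/-!
By Cramer's rule, four affinely independent points generate a difference vector `v` with positive
coordinates; the point sought is `α + v`.

Call a set `S` merge-closed if `A.sum - B.sum` lies in `S` whenever it is nonnegative and `A`, `B`
are multisets in `S` with `#A = #B + 1` and `#B ≤ 2`; `E_2^∞(T)` is such a set. A vector `v ≥ 0` in
the group generated by the differences of points of `S` has the form `X.sum - Y.sum` with `X`, `Y`
multisets in `S` of equal cardinality. As long as this cardinality is at least `2`, two points of
one side dominate a point of the other, or three points of one side dominate two points of the
other, and merging them shortens the representation. Indeed, one of `X`, `Y` contains maximal points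
for two of the three coordinates, so without a merge its points are small in the third coordinate.
If that side is `X`, this contradicts `Y.sum ≤ X.sum`; if it is `Y`, the third coordinate is no
obstacle to dominating a point of `Y` by two points of `X`, which is then possible by a planar
argument. The descent ends at `v = x - y` with `x, y ∈ S`, and `α + x - y` is one more merge.
-/

open scoped Pointwise

section PairSums

variable {α R : Type*} [CommRing R] [LinearOrder R] [IsStrictOrderedRing R]

theorem two_mul_sum_map_lt {X : Multiset α} {f : α → R} {c : R} (hX : 1 < X.card)
    (hpair : ∀ a b, {a, b} ≤ X → f a + f b < c) : 2 * (X.map f).sum < X.card * c := by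
  obtain ⟨p, hp, hmax⟩ := X.exists_max_image f (Multiset.card_pos.1 (by omega))
  obtain ⟨X', rfl⟩ := Multiset.exists_cons_of_mem hp
  rw [Multiset.card_cons] at hX
  obtain ⟨q, hq⟩ := Multiset.card_pos_iff_exists_mem.1 (show 0 < X'.card by omega)
  have hpq := hpair p q (Multiset.cons_le_cons p (Multiset.singleton_le.2 hq))
  obtain ⟨W, rfl⟩ := Multiset.exists_cons_of_mem hq
  have hW : (W.map fun w ↦ 2 * f w).sum ≤ W.card • c := by
    rw [← Multiset.card_map (fun w ↦ 2 * f w)]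
    refine Multiset.sum_le_card_nsmul _ _ (Multiset.forall_mem_map_iff.2 fun w hw ↦ ?_)
    have hw' : w ∈ q ::ₘ W := Multiset.mem_cons_of_mem hw
    have hpw := hpair p w (Multiset.cons_le_cons p (Multiset.singleton_le.2 hw'))
    have hwp := hmax w (Multiset.mem_cons_of_mem hw')
    linarith
  rw [Multiset.sum_map_mul_left, nsmul_eq_mul] at hW
  simp only [Multiset.map_cons, Multiset.sum_cons, Multiset.card_cons, Nat.cast_add, Nat.cast_one]
  linarith

theorem two_mul_card_lt {X Y A : Multiset α} {f : α → R} (hA : A ≤ Y) (hY : ∀ y ∈ Y, 0 ≤ f y)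
    (htwo : 1 < X.card) (hsum : (Y.map f).sum ≤ (X.map f).sum)
    (hpair : ∀ a b, {a, b} ≤ X → ∀ y ∈ A, f a + f b < f y) : 2 * A.card < X.card := by
  by_contra! hcard
  obtain ⟨m, hm, hmin⟩ := A.exists_min_image f (Multiset.card_pos.1 (by omega))
  have hXm := two_mul_sum_map_lt htwo fun a b hab ↦ hpair a b hab m hm
  have hAm : A.card • f m ≤ (A.map f).sum := by
    rw [← Multiset.card_map f]
    exact Multiset.card_nsmul_le_sum (Multiset.forall_mem_map_iff.2 hmin)
  have hAY : (A.map f).sum ≤ (Y.map f).sum := by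
    obtain ⟨B, rfl⟩ := Multiset.le_iff_exists_add.1 hA
    rw [Multiset.map_add, Multiset.sum_add]
    refine le_add_of_nonneg_right (Multiset.sum_nonneg (Multiset.forall_mem_map_iff.2 ?_))
    exact fun b hb ↦ hY b (Multiset.mem_add.2 (Or.inr hb))
  have hcard' : (X.card : R) * f m ≤ 2 * A.card * f m :=
    mul_le_mul_of_nonneg_right (by exact_mod_cast hcard) (hY m (Multiset.mem_of_le hA hm))
  rw [nsmul_eq_mul] at hAm
  linarith

variable {X Y : Multiset α} {f g : α → R}

theorem forall_lt_or_forall_lt (hX : ∀ x ∈ X, 0 ≤ f x ∧ 0 ≤ g x) {y : α}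
    (hinc : ∀ x ∈ X, f x ≤ f y → g y < g x)
    (hno : ∀ a b, {a, b} ≤ X → f y ≤ f a + f b → g a + g b < g y) :
    (∀ x ∈ X, g y < g x) ∨ ∀ x ∈ X, f y < f x := by
  by_contra! ⟨⟨a, ha, hga⟩, b, hb, hfb⟩
  have hfa : f y < f a := lt_of_not_ge fun h ↦ (hinc a ha h).not_ge hga
  have hgb : g y < g b := hinc b hb hfb
  obtain ⟨X', rfl⟩ := Multiset.exists_cons_of_mem ha
  have hbX' : b ∈ X' := (Multiset.mem_cons.1 hb).resolve_left fun h ↦ (h ▸ hfb).not_gt hfa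
  have hfab : f y ≤ f a + f b := hfa.le.trans (le_add_of_nonneg_right (hX b hb).1)
  have hgab : g y ≤ g a + g b := hgb.le.trans (le_add_of_nonneg_left (hX a ha).2)
  exact (hno a b (Multiset.cons_le_cons a (Multiset.singleton_le.2 hbX')) hfab).not_ge hgab

/- If no pair works, then every point of `Y` lies below all of `X` in one of the two coordinates,
and hence above all pair sums in the other. -/
theorem exists_pair_le_add_of_incomparable (hX : ∀ x ∈ X, 0 ≤ f x ∧ 0 ≤ g x)
    (hY : ∀ y ∈ Y, 0 ≤ f y ∧ 0 ≤ g y) (hcard : X.card = Y.card) (htwo : 1 < X.card)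
    (hf : (Y.map f).sum ≤ (X.map f).sum) (hg : (Y.map g).sum ≤ (X.map g).sum)
    (hinc : ∀ x ∈ X, ∀ y ∈ Y, f x ≤ f y → g y < g x) :
    ∃ a b, {a, b} ≤ X ∧ ∃ y ∈ Y, f y ≤ f a + f b ∧ g y ≤ g a + g b := by
  by_contra! hno
  have mem_of_pair {a b : α} (hab : {a, b} ≤ X) : a ∈ X ∧ b ∈ X :=
    ⟨Multiset.mem_of_le hab (by simp), Multiset.mem_of_le hab (by simp)⟩
  have hleft : 2 * (Y.filter fun y ↦ ∀ x ∈ X, g y < g x).card < X.card := by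
    refine two_mul_card_lt (Multiset.filter_le _ _) (fun y hy ↦ (hY y hy).1) htwo hf
      fun a b hab y hy ↦ ?_
    obtain ⟨hyY, hyX⟩ := Multiset.mem_filter.1 hy
    obtain ⟨ha, hb⟩ := mem_of_pair hab
    by_contra! hfy
    linarith [hno a b hab y hyY hfy, hyX a ha, (hX b hb).2]
  have hright : 2 * (Y.filter fun y ↦ ¬ ∀ x ∈ X, g y < g x).card < X.card := by
    refine two_mul_card_lt (Multiset.filter_le _ _) (fun y hy ↦ (hY y hy).2) htwo hg
      fun a b hab y hy ↦ ?_
    obtain ⟨hyY, hyX⟩ := Multiset.mem_filter.1 hy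
    obtain ⟨ha, hb⟩ := mem_of_pair hab
    have hfy : f y < f a := (forall_lt_or_forall_lt hX (hinc · · y hyY)
      (hno · · · y hyY)).resolve_left hyX a ha
    exact hno a b hab y hyY (hfy.le.trans (le_add_of_nonneg_right (hX b hb).1))
  have hsplit := congrArg Multiset.card (Y.filter_add_not fun y ↦ ∀ x ∈ X, g y < g x)
  rw [Multiset.card_add] at hsplit
  omega

theorem exists_pair_le_add (hX : ∀ x ∈ X, 0 ≤ f x ∧ 0 ≤ g x) (hY : ∀ y ∈ Y, 0 ≤ f y ∧ 0 ≤ g y)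
    (hcard : X.card = Y.card) (htwo : 1 < X.card)
    (hf : (Y.map f).sum ≤ (X.map f).sum) (hg : (Y.map g).sum ≤ (X.map g).sum) :
    ∃ a b, {a, b} ≤ X ∧ ∃ y ∈ Y, f y ≤ f a + f b ∧ g y ≤ g a + g b := by
  induction hn : X.card generalizing X Y with
  | zero => omega
  | succ n ih =>
    by_cases hinc : ∀ x ∈ X, ∀ y ∈ Y, f x ≤ f y → g y < g x
    · exact exists_pair_le_add_of_incomparable hX hY hcard htwo hf hg hinc
    push Not at hinc
    obtain ⟨x, hx, y, hy, hfxy, hgxy⟩ := hinc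
    obtain ⟨X', rfl⟩ := Multiset.exists_cons_of_mem hx
    obtain ⟨Y', rfl⟩ := Multiset.exists_cons_of_mem hy
    simp only [Multiset.map_cons, Multiset.sum_cons, Multiset.card_cons, Multiset.forall_mem_cons]
      at hX hY hcard htwo hf hg hn
    have hf' : (Y'.map f).sum ≤ (X'.map f).sum := by linarith
    have hg' : (Y'.map g).sum ≤ (X'.map g).sum := by linarith
    obtain hone | htwo' : X'.card = 1 ∨ 1 < X'.card := by omega
    · obtain ⟨a, rfl⟩ := Multiset.card_eq_one.1 hone
      obtain ⟨b, rfl⟩ := Multiset.card_eq_one.1 (show Y'.card = 1 by omega)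
      simp only [Multiset.map_singleton, Multiset.sum_singleton] at hf' hg'
      exact ⟨x, a, le_rfl, b, by simp, by linarith [hX.1.1], by linarith [hX.1.2]⟩
    · obtain ⟨a, b, hab, z, hz, hfz, hgz⟩ :=
        ih hX.2 hY.2 (by omega) htwo' hf' hg' (by omega)
      exact ⟨a, b, hab.trans (Multiset.le_cons_self _ _), z, Multiset.mem_cons_of_mem hz, hfz, hgz⟩

theorem sum_map_lt_sum_map_of_pairs (hcard : X.card = Y.card) {a b r : α} (hab : {a, b} ≤ X)
    (hlt : ∀ y ∈ Y, f a + f b < f y) (hr : 0 ≤ f r) (hmax : ∀ x ∈ X, f x ≤ f r)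
    (hpair : ∀ y z, {y, z} ≤ Y → f r < f y ∨ f r < f z) :
    (X.map f).sum < (Y.map f).sum := by
  obtain ⟨W, rfl⟩ := Multiset.le_iff_exists_add.1 hab
  rw [Multiset.card_add, Multiset.card_pair] at hcard
  obtain ⟨m, hm, hmin⟩ := Y.exists_min_image f (Multiset.card_pos.1 (by omega))
  obtain ⟨V, rfl⟩ := Multiset.exists_cons_of_mem hm
  have hVW : V.card = W.card + 1 := by
    rw [Multiset.card_cons] at hcard
    omega
  have hW : (W.map f).sum ≤ W.card • f r := by
    rw [← Multiset.card_map f]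
    refine Multiset.sum_le_card_nsmul _ _ (Multiset.forall_mem_map_iff.2 fun w hw ↦ hmax w ?_)
    exact Multiset.mem_add.2 (Or.inr hw)
  have hV : V.card • f r ≤ (V.map f).sum := by
    rw [← Multiset.card_map f]
    refine Multiset.card_nsmul_le_sum (Multiset.forall_mem_map_iff.2 fun v hv ↦ ?_)
    have hmv := hpair m v (Multiset.cons_le_cons m (Multiset.singleton_le.2 hv))
    exact hmv.elim (fun h ↦ h.le.trans (hmin v (Multiset.mem_cons_of_mem hv))) le_of_lt
  have habm := hlt m hm
  rw [hVW, succ_nsmul] at hV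
  simp only [Multiset.map_add, Multiset.sum_add, Multiset.insert_eq_cons, Multiset.map_cons,
    Multiset.sum_cons, Multiset.map_singleton, Multiset.sum_singleton]
  linarith

end PairSums

section Merge

variable {M : Type*} [AddCommGroup M] [PartialOrder M] {n : ℕ} {X Y : Multiset M} {S : Set M}

/-- A merge of size at most `n` replaces `m + 1` points of `X` with sum `A` and `m` points of `Y`
with sum `B`, where `B ≤ A` and `1 ≤ m ≤ n`, by the single point `A - B` of `X`. `MergeFree n X Y`
says that no such merge is possible; the roles of `X` and `Y` are not symmetric. -/
def MergeFree (n : ℕ) (X Y : Multiset M) : Prop :=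
  ∀ A ≤ X, ∀ B ≤ Y, B ≠ 0 → A.card = B.card + 1 → B.card ≤ n → ¬ B.sum ≤ A.sum

/-- Stability of a set of points under merging, the form in which the `n`-completion enters the
argument. -/
def MergeClosed (n : ℕ) (S : Set M) : Prop :=
  ∀ A B : Multiset M, (∀ a ∈ A, a ∈ S) → (∀ b ∈ B, b ∈ S) → A.card = B.card + 1 → B.card ≤ n →
    B.sum ≤ A.sum → A.sum - B.sum ∈ S

theorem MergeFree.not_le_add (h : MergeFree n X Y) (hn : 1 ≤ n) {a b y : M} (hab : {a, b} ≤ X)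
    (hy : y ∈ Y) : ¬ y ≤ a + b := by
  simpa using h _ hab {y} (Multiset.singleton_le.2 hy) (by simp) (by simp) (by simpa)

theorem MergeFree.not_add_le_add (h : MergeFree n X Y) (hn : 2 ≤ n) {a b c y z : M}
    (habc : {a, b, c} ≤ X) (hyz : {y, z} ≤ Y) : ¬ y + z ≤ a + b + c := by
  simpa [add_assoc] using h _ habc _ hyz (by simp) (by simp) (by simpa)

theorem MergeClosed.exists_card_lt (hS : MergeClosed n S) (hX : ∀ x ∈ X, x ∈ S)
    (hY : ∀ y ∈ Y, y ∈ S) (hcard : X.card = Y.card) (hXY : ¬ MergeFree n X Y) :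
    ∃ X' Y' : Multiset M, (∀ x ∈ X', x ∈ S) ∧ (∀ y ∈ Y', y ∈ S) ∧ X'.card = Y'.card ∧
      X'.card < X.card ∧ X'.sum - Y'.sum = X.sum - Y.sum := by
  unfold MergeFree at hXY
  push Not at hXY
  obtain ⟨A, hA, B, hB, hB0, hAB, hBn, hle⟩ := hXY
  obtain ⟨X', rfl⟩ := Multiset.le_iff_exists_add.1 hA
  obtain ⟨Y', rfl⟩ := Multiset.le_iff_exists_add.1 hB
  simp only [Multiset.mem_add, or_imp, forall_and, Multiset.card_add] at hX hY hcard
  have hBpos : 0 < B.card := Multiset.card_pos.2 hB0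
  refine ⟨(A.sum - B.sum) ::ₘ X', Y', Multiset.forall_mem_cons.2 ⟨?_, hX.2⟩, hY.2, ?_, ?_, ?_⟩
  · exact hS A B hX.1 hY.1 hAB hBn hle
  · rw [Multiset.card_cons]
    omega
  · rw [Multiset.card_cons, Multiset.card_add]
    omega
  · simp only [Multiset.sum_cons, Multiset.sum_add]
    abel

end Merge

section DifferenceGroup

theorem exists_sum_sub_sum_of_mem_closure {M : Type*} [AddCommGroup M] {S : Set M} {v : M}
    (hv : v ∈ AddSubgroup.closure (S - S)) :
    ∃ X Y : Multiset M, (∀ x ∈ X, x ∈ S) ∧ (∀ y ∈ Y, y ∈ S) ∧ X.card = Y.card ∧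
      v = X.sum - Y.sum := by
  induction hv using AddSubgroup.closure_induction with
  | mem v hv =>
    obtain ⟨a, ha, b, hb, rfl⟩ := hv
    exact ⟨{a}, {b}, by simpa, by simpa, by simp, by simp⟩
  | zero => exact ⟨0, 0, by simp, by simp, rfl, by simp⟩
  | add v w _ _ hv hw =>
    obtain ⟨X, Y, hX, hY, hXY, rfl⟩ := hv
    obtain ⟨X', Y', hX', hY', hXY', rfl⟩ := hw
    refine ⟨X + X', Y + Y', ?_, ?_, by simp [hXY, hXY'], ?_⟩
    · exact fun x hx ↦ (Multiset.mem_add.1 hx).elim (hX x) (hX' x)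
    · exact fun y hy ↦ (Multiset.mem_add.1 hy).elim (hY y) (hY' y)
    · simp only [Multiset.sum_add]
      abel
  | neg v _ hv =>
    obtain ⟨X, Y, hX, hY, hXY, rfl⟩ := hv
    exact ⟨Y, X, hY, hX, hXY.symm, by abel⟩

end DifferenceGroup

section ThreeCoordinates

variable {ι R : Type*} [LinearOrder R] {X Y : Multiset (ι → R)} {i j k : ι}

/-- In the coordinate `l`, some point of `X` is at least as large as every point of `Y`. -/
def TopsAt (l : ι) (X Y : Multiset (ι → R)) : Prop :=
  ∃ p ∈ X, ∀ y ∈ Y, y l ≤ p l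

theorem topsAt_or_topsAt (l : ι) (hX : X ≠ 0) : TopsAt l X Y ∨ TopsAt l Y X := by
  have hXY : X + Y ≠ 0 := fun h ↦ hX (add_eq_zero.1 h).1
  obtain ⟨p, hp, hmax⟩ := (X + Y).exists_max_image (fun x ↦ x l) hXY
  simp only [Multiset.mem_add, or_imp, forall_and] at hp hmax
  exact hp.imp (fun h ↦ ⟨p, h, hmax.2⟩) fun h ↦ ⟨p, h, hmax.1⟩

variable [CommRing R]

theorem MergeFree.add_lt {n : ℕ} (h : MergeFree n X Y) (hn : 1 ≤ n)
    (hijk : ∀ l, l = i ∨ l = j ∨ l = k) {a b y : ι → R} (hab : {a, b} ≤ X) (hy : y ∈ Y)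
    (hi : y i ≤ a i + b i) (hj : y j ≤ a j + b j) : a k + b k < y k := by
  by_contra! hk
  refine h.not_le_add hn hab hy fun l ↦ ?_
  obtain rfl | rfl | rfl := hijk l <;> assumption

variable [IsStrictOrderedRing R]

theorem MergeFree.exists_pair_lt {n : ℕ} (h : MergeFree n X Y) (hn : 1 ≤ n)
    (hijk : ∀ l, l = i ∨ l = j ∨ l = k) (hX : ∀ x ∈ X, 0 ≤ x) (htwo : 1 < X.card)
    (hi : TopsAt i X Y) (hj : TopsAt j X Y) :
    ∃ a b, {a, b} ≤ X ∧ ∀ y ∈ Y, a k + b k < y k := by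
  obtain ⟨p, hp, hpi⟩ := hi
  obtain ⟨q, hq, hqj⟩ := hj
  obtain ⟨X', rfl⟩ := Multiset.exists_cons_of_mem hp
  obtain ⟨b, hb, hbj⟩ : ∃ b ∈ X', ∀ y ∈ Y, y j ≤ p j + b j := by
    obtain rfl | hqX' := Multiset.mem_cons.1 hq
    · rw [Multiset.card_cons] at htwo
      obtain ⟨b, hb⟩ := Multiset.card_pos_iff_exists_mem.1 (show 0 < X'.card by omega)
      have hb0 := hX b (Multiset.mem_cons_of_mem hb) j
      exact ⟨b, hb, fun y hy ↦ (hqj y hy).trans (le_add_of_nonneg_right hb0)⟩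
    · exact ⟨q, hqX', fun y hy ↦ (hqj y hy).trans (le_add_of_nonneg_left (hX p hp j))⟩
  have hpb : {p, b} ≤ p ::ₘ X' := Multiset.cons_le_cons p (Multiset.singleton_le.2 hb)
  have hb0 := hX b (Multiset.mem_cons_of_mem hb) i
  exact ⟨p, b, hpb, fun y hy ↦ h.add_lt hn hijk hpb hy
    ((hpi y hy).trans (le_add_of_nonneg_right hb0)) (hbj y hy)⟩

theorem MergeFree.pair_sums_lt_of_le {n : ℕ} (h : MergeFree n X Y) (hn : 1 ≤ n)
    (hijk : ∀ l, l = i ∨ l = j ∨ l = k) (hX : ∀ x ∈ X, 0 ≤ x) {p q r y : ι → R}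
    (hpqr : {p, q, r} ≤ X) (hy : y ∈ Y) (hi : y i ≤ p i) (hj : y j ≤ q j) (hk : y k ≤ r k) :
    q i + r i < y i ∧ p j + r j < y j ∧ p k + q k < y k := by
  have hp0 : 0 ≤ p := hX p (Multiset.mem_of_le hpqr (by simp))
  have hq0 : 0 ≤ q := hX q (Multiset.mem_of_le hpqr (by simp))
  have hr0 : 0 ≤ r := hX r (Multiset.mem_of_le hpqr (by simp))
  have hpq : {p, q} ≤ X := le_trans (by simp) hpqr
  have hpr : {p, r} ≤ X := le_trans (Multiset.cons_le_cons p (Multiset.le_cons_self _ _)) hpqr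
  have hqr : {q, r} ≤ X := (Multiset.le_cons_self _ _).trans hpqr
  refine ⟨?_, ?_, ?_⟩
  · exact h.add_lt hn (fun l ↦ or_assoc.1 (hijk l).symm) hqr hy
      (hj.trans (le_add_of_nonneg_right (hr0 j))) (hk.trans (le_add_of_nonneg_left (hq0 k)))
  · exact h.add_lt hn (fun l ↦ (hijk l).imp_right Or.symm) hpr hy
      (hi.trans (le_add_of_nonneg_right (hr0 i))) (hk.trans (le_add_of_nonneg_left (hp0 k)))
  · exact h.add_lt hn hijk hpq hy
      (hi.trans (le_add_of_nonneg_right (hq0 i))) (hj.trans (le_add_of_nonneg_left (hp0 j)))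

/- By `pair_sums_lt_of_le`, if `y` and `z` were both at most `r` in the coordinate `k`, then `y + z`
could not dominate any of `p`, `q`, `r`, which would force `y + z ≤ p + q + r`. -/
theorem MergeFree.lt_or_lt_of_triple (hijk : ∀ l, l = i ∨ l = j ∨ l = k) (hXY : MergeFree 2 X Y)
    (hYX : MergeFree 2 Y X) (hX : ∀ x ∈ X, 0 ≤ x) {p q r y z : ι → R} (hpqr : {p, q, r} ≤ X)
    (hpi : ∀ y ∈ Y, y i ≤ p i) (hqj : ∀ y ∈ Y, y j ≤ q j) (hyz : {y, z} ≤ Y) :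
    r k < y k ∨ r k < z k := by
  by_contra! ⟨hyr, hzr⟩
  have hp : p ∈ X := Multiset.mem_of_le hpqr (by simp)
  have hq : q ∈ X := Multiset.mem_of_le hpqr (by simp)
  have hr : r ∈ X := Multiset.mem_of_le hpqr (by simp)
  have hy : y ∈ Y := Multiset.mem_of_le hyz (by simp)
  have hz : z ∈ Y := Multiset.mem_of_le hyz (by simp)
  obtain ⟨hyi, hyj, hyk⟩ :=
    hXY.pair_sums_lt_of_le one_le_two hijk hX hpqr hy (hpi y hy) (hqj y hy) hyr
  obtain ⟨hzi, hzj, hzk⟩ :=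
    hXY.pair_sums_lt_of_le one_le_two hijk hX hpqr hz (hpi z hz) (hqj z hz) hzr
  have hp0 (l : ι) : 0 ≤ p l := hX p hp l
  have hq0 (l : ι) : 0 ≤ q l := hX q hq l
  have hr0 (l : ι) : 0 ≤ r l := hX r hr l
  have hsum_i : y i + z i < p i :=
    hYX.add_lt one_le_two (fun l ↦ or_assoc.1 (hijk l).symm) hyz hp
      (by linarith [hp0 j, hr0 j]) (by linarith [hp0 k, hq0 k])
  have hsum_j : y j + z j < q j :=
    hYX.add_lt one_le_two (fun l ↦ (hijk l).imp_right Or.symm) hyz hq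
      (by linarith [hq0 i, hr0 i]) (by linarith [hp0 k, hq0 k])
  have hsum_k : y k + z k < r k :=
    hYX.add_lt one_le_two hijk hyz hr
      (by linarith [hq0 i, hr0 i]) (by linarith [hp0 j, hr0 j])
  refine hXY.not_add_le_add le_rfl hpqr hyz fun l ↦ ?_
  simp only [Pi.add_apply]
  obtain rfl | rfl | rfl := hijk l
  · linarith [hq0 l, hr0 l]
  · linarith [hp0 l, hr0 l]
  · linarith [hp0 l, hq0 l]

theorem MergeFree.lt_or_lt (hijk : ∀ l, l = i ∨ l = j ∨ l = k) (hXY : MergeFree 2 X Y)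
    (hYX : MergeFree 2 Y X) (hX : ∀ x ∈ X, 0 ≤ x) (htwo : 1 < X.card) (hi : TopsAt i X Y)
    (hj : TopsAt j X Y) {r y z : ι → R} (hr : r ∈ X) (hyz : {y, z} ≤ Y) :
    r k < y k ∨ r k < z k := by
  obtain ⟨p, hp, hpi⟩ := hi
  obtain ⟨q, hq, hqj⟩ := hj
  have hy : y ∈ Y := Multiset.mem_of_le hyz (by simp)
  obtain ⟨X', rfl⟩ := Multiset.exists_cons_of_mem hp
  obtain rfl | hqX' := Multiset.mem_cons.1 hq
  · have hlt (x : ι → R) (hx : x ∈ X') : q k + x k < y k :=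
      have hx0 : 0 ≤ x := hX x (Multiset.mem_cons_of_mem hx)
      hXY.add_lt one_le_two hijk (Multiset.cons_le_cons q (Multiset.singleton_le.2 hx)) hy
        ((hpi y hy).trans (le_add_of_nonneg_right (hx0 i)))
        ((hqj y hy).trans (le_add_of_nonneg_right (hx0 j)))
    refine Or.inl ?_
    obtain rfl | hrX' := Multiset.mem_cons.1 hr
    · rw [Multiset.card_cons] at htwo
      obtain ⟨b, hb⟩ := Multiset.card_pos_iff_exists_mem.1 (show 0 < X'.card by omega)
      exact (le_add_of_nonneg_right (hX b (Multiset.mem_cons_of_mem hb) k)).trans_lt (hlt b hb)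
    · exact (le_add_of_nonneg_left (hX q hp k)).trans_lt (hlt r hrX')
  · obtain ⟨W, rfl⟩ := Multiset.exists_cons_of_mem hqX'
    have hp0 : 0 ≤ p := hX p hp
    have hq0 : 0 ≤ q := hX q hq
    have hpq : p k + q k < y k :=
      hXY.add_lt one_le_two hijk (Multiset.cons_le_cons p (Multiset.singleton_le.2 hqX')) hy
        ((hpi y hy).trans (le_add_of_nonneg_right (hq0 i)))
        ((hqj y hy).trans (le_add_of_nonneg_left (hp0 j)))
    simp only [Multiset.mem_cons] at hr
    obtain rfl | rfl | hrW := hr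
    · exact Or.inl ((le_add_of_nonneg_right (hq0 k)).trans_lt hpq)
    · exact Or.inl ((le_add_of_nonneg_left (hp0 k)).trans_lt hpq)
    · exact hXY.lt_or_lt_of_triple hijk hYX hX (Multiset.cons_le_cons p
        (Multiset.cons_le_cons q (Multiset.singleton_le.2 hrW))) hpi hqj hyz

theorem not_mergeFree_of_topsAt_left (hijk : ∀ l, l = i ∨ l = j ∨ l = k) (hXY : MergeFree 2 X Y)
    (hX : ∀ x ∈ X, 0 ≤ x) (hcard : X.card = Y.card) (htwo : 1 < X.card) (hle : Y.sum ≤ X.sum)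
    (hi : TopsAt i X Y) (hj : TopsAt j X Y) : ¬ MergeFree 2 Y X := by
  intro hYX
  obtain ⟨a, b, hab, hlt⟩ := hXY.exists_pair_lt one_le_two hijk hX htwo hi hj
  obtain ⟨r, hr, hmax⟩ := X.exists_max_image (fun x ↦ x k) (Multiset.card_pos.1 (by omega))
  refine (sum_map_lt_sum_map_of_pairs hcard hab hlt (hX r hr k) hmax fun y z hyz ↦ ?_).not_ge ?_
  · exact hXY.lt_or_lt hijk hYX hX htwo hi hj hr hyz
  · simpa only [Pi.multiset_sum_apply] using hle k

theorem not_mergeFree_of_topsAt_right (hijk : ∀ l, l = i ∨ l = j ∨ l = k) (hYX : MergeFree 2 Y X)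
    (hX : ∀ x ∈ X, 0 ≤ x) (hY : ∀ y ∈ Y, 0 ≤ y) (hcard : X.card = Y.card) (htwo : 1 < X.card)
    (hle : Y.sum ≤ X.sum) (hi : TopsAt i Y X) (hj : TopsAt j Y X) : ¬ MergeFree 2 X Y := by
  intro hXY
  have hsum (l : ι) : (Y.map fun y ↦ y l).sum ≤ (X.map fun x ↦ x l).sum := by
    simpa only [Pi.multiset_sum_apply] using hle l
  obtain ⟨a, b, hab, y, hy, hyi, hyj⟩ := exists_pair_le_add (f := fun x ↦ x i) (g := fun x ↦ x j)
    (fun x hx ↦ ⟨hX x hx i, hX x hx j⟩) (fun y hy ↦ ⟨hY y hy i, hY y hy j⟩) hcard htwo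
    (hsum i) (hsum j)
  have ha0 : 0 ≤ a k := hX a (Multiset.mem_of_le hab (by simp)) k
  have hb0 : 0 ≤ b k := hX b (Multiset.mem_of_le hab (by simp)) k
  have habk : a k + b k < y k := hXY.add_lt one_le_two hijk hab hy hyi hyj
  obtain h | h := hYX.lt_or_lt hijk hXY hY (hcard ▸ htwo) hi hj hy hab
  · linarith
  · linarith

theorem not_mergeFree_and_mergeFree {X Y : Multiset (Fin 3 → R)} (hX : ∀ x ∈ X, 0 ≤ x)
    (hY : ∀ y ∈ Y, 0 ≤ y) (hcard : X.card = Y.card) (htwo : 1 < X.card) (hle : Y.sum ≤ X.sum) :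
    ¬ (MergeFree 2 X Y ∧ MergeFree 2 Y X) := by
  rintro ⟨hXY, hYX⟩
  have hX0 : X ≠ 0 := Multiset.card_pos.1 (by omega)
  have not_top_X {i j k : Fin 3} (hijk : ∀ l, l = i ∨ l = j ∨ l = k) (hi : TopsAt i X Y) :
      ¬ TopsAt j X Y := fun hj ↦
    not_mergeFree_of_topsAt_left hijk hXY hX hcard htwo hle hi hj hYX
  have not_top_Y {i j k : Fin 3} (hijk : ∀ l, l = i ∨ l = j ∨ l = k) (hi : TopsAt i Y X) :
      ¬ TopsAt j Y X := fun hj ↦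
    not_mergeFree_of_topsAt_right hijk hYX hX hY hcard htwo hle hi hj hXY
  have h01 : ∀ l : Fin 3, l = 0 ∨ l = 1 ∨ l = 2 := by decide
  have h12 : ∀ l : Fin 3, l = 1 ∨ l = 2 ∨ l = 0 := by decide
  have h20 : ∀ l : Fin 3, l = 2 ∨ l = 0 ∨ l = 1 := by decide
  obtain h0 | h0 := topsAt_or_topsAt (Y := Y) 0 hX0 <;>
    obtain h1 | h1 := topsAt_or_topsAt (Y := Y) 1 hX0 <;>
      obtain h2 | h2 := topsAt_or_topsAt (Y := Y) 2 hX0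
  all_goals first
    | exact not_top_X h01 h0 h1 | exact not_top_X h12 h1 h2 | exact not_top_X h20 h2 h0
    | exact not_top_Y h01 h0 h1 | exact not_top_Y h12 h1 h2 | exact not_top_Y h20 h2 h0

theorem MergeClosed.add_sum_sub_sum_mem {S : Set (Fin 3 → R)} (hS : MergeClosed 2 S)
    (hS0 : ∀ x ∈ S, 0 ≤ x) {a : Fin 3 → R} (ha : a ∈ S) {X Y : Multiset (Fin 3 → R)}
    (hX : ∀ x ∈ X, x ∈ S) (hY : ∀ y ∈ Y, y ∈ S) (hcard : X.card = Y.card)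
    (hle : Y.sum ≤ X.sum) : a + (X.sum - Y.sum) ∈ S := by
  induction hn : X.card using Nat.strong_induction_on generalizing X Y with
  | h n ih =>
    obtain hzero | hone | htwo : X.card = 0 ∨ X.card = 1 ∨ 1 < X.card := by omega
    · obtain rfl := Multiset.card_eq_zero.1 hzero
      obtain rfl := Multiset.card_eq_zero.1 (hcard ▸ hzero)
      simpa
    · obtain ⟨x, rfl⟩ := Multiset.card_eq_one.1 hone
      obtain ⟨y, rfl⟩ := Multiset.card_eq_one.1 (hcard ▸ hone)
      simp only [Multiset.mem_singleton, forall_eq, Multiset.sum_singleton] at hX hY hle ⊢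
      have hmem : ({a, x} : Multiset (Fin 3 → R)).sum - ({y} : Multiset _).sum ∈ S :=
        hS {a, x} {y} (by simp [ha, hX]) (by simpa) (by simp) (by simp)
          (by simpa using hle.trans (le_add_of_nonneg_left (hS0 a ha)))
      simpa [add_sub_assoc] using hmem
    · have hmerge := not_mergeFree_and_mergeFree (fun x hx ↦ hS0 x (hX x hx))
        (fun y hy ↦ hS0 y (hY y hy)) hcard htwo hle
      obtain hXY | hYX := not_and_or.1 hmerge
      · obtain ⟨X', Y', hX', hY', hcard', hlt, heq⟩ := hS.exists_card_lt hX hY hcard hXY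
        rw [← heq]
        exact ih _ (hn ▸ hlt) hX' hY' hcard' (sub_nonneg.1 (heq ▸ sub_nonneg.2 hle)) rfl
      · obtain ⟨Y', X', hY', hX', hcard', hlt, heq⟩ := hS.exists_card_lt hY hX hcard.symm hYX
        have heq' : X'.sum - Y'.sum = X.sum - Y.sum := by
          rw [← neg_sub Y'.sum, heq, neg_sub]
        rw [← heq']
        exact ih _ (by omega) hX' hY' hcard'.symm (sub_nonneg.1 (heq' ▸ sub_nonneg.2 hle)) rfl

theorem MergeClosed.add_mem {S : Set (Fin 3 → R)} (hS : MergeClosed 2 S)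
    (hS0 : ∀ x ∈ S, 0 ≤ x) {a v : Fin 3 → R} (ha : a ∈ S) (hv : v ∈ AddSubgroup.closure (S - S))
    (hv0 : 0 ≤ v) : a + v ∈ S := by
  obtain ⟨X, Y, hX, hY, hcard, rfl⟩ := exists_sum_sub_sum_of_mem_closure hv
  exact hS.add_sum_sub_sum_mem hS0 ha hX hY hcard (sub_nonneg.1 hv0)

end ThreeCoordinates

section CountDifference

variable {M : Type*} [DecidableEq M] {A B : Multiset M} {F : Finset M}

theorem sum_count_sub_count_smul_sub [AddCommGroup M] (hA : A.toFinset ⊆ F) (hB : B.toFinset ⊆ F)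
    (hcard : A.card = B.card) (γ : M) :
    ∑ α ∈ F, ((A.count α : ℤ) - B.count α) • (α - γ) = A.sum - B.sum := by
  have hsum {C : Multiset M} (hC : C.toFinset ⊆ F) :
      ∑ α ∈ F, (C.count α : ℤ) • (α - γ) = C.sum - C.card • γ := by
    simp only [natCast_zsmul, smul_sub, Finset.sum_sub_distrib]
    rw [← Finset.sum_multiset_count_of_subset C F hC, ← Finset.sum_smul,
      Multiset.sum_count_eq_card fun α hα ↦ hC (Multiset.mem_toFinset.2 hα)]
  simp only [sub_smul, Finset.sum_sub_distrib]
  rw [hsum hA, hsum hB, hcard]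
  abel

theorem sum_max_count_sub_count_le (hA : A.toFinset ⊆ F) :
    ∑ α ∈ F, max ((A.count α : ℤ) - B.count α) 0 ≤ A.card := by
  rw [← Multiset.sum_count_eq_card fun α hα ↦ hA (Multiset.mem_toFinset.2 hα), Nat.cast_sum]
  exact Finset.sum_le_sum fun α _ ↦ by omega

end CountDifference

section Completion

variable {d n : ℕ} {G : Set (Fin d → ℤ)}

theorem mem_NN_iff {x : Fin d → ℤ} : x ∈ NN d ↔ 0 ≤ x :=
  Iff.rfl

theorem add_sum_smul_sub_mem_cosetGen {γ : Fin d → ℤ} (hγ : γ ∈ G) {F : Finset (Fin d → ℤ)}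
    (hF : ↑F ⊆ G) (c : (Fin d → ℤ) → ℤ) : γ + ∑ α ∈ F, c α • (α - γ) ∈ cosetGen G := by
  refine Set.mem_biUnion hγ (Set.mem_image_of_mem _ (sum_mem fun α hα ↦ zsmul_mem ?_ _))
  exact AddSubgroup.subset_closure (Set.mem_image_of_mem _ (hF hα))

theorem add_sum_smul_sub_mem_Eext {γ : Fin d → ℤ} (hγ : γ ∈ G) {F : Finset (Fin d → ℤ)}
    (hF : ↑F ⊆ G) (c : (Fin d → ℤ) → ℤ) (hNN : γ + ∑ α ∈ F, c α • (α - γ) ∈ NN d)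
    (hpos : ∑ α ∈ F, max (c α) 0 ≤ (n : ℤ)) (hneg : ∑ α ∈ F, max (-c α) 0 ≤ (n : ℤ)) :
    γ + ∑ α ∈ F, c α • (α - γ) ∈ Eext n G := by
  let m : (Fin d → ℤ) →₀ ℤ := Finsupp.indicator (F.erase γ) fun α _ ↦ c α
  have hm : ↑m.support ⊆ G \ {γ} := fun α hα ↦ by
    obtain ⟨hne, hαF⟩ := Finset.mem_erase.1 (Finsupp.support_indicator_subset _ _ hα)
    exact ⟨hF hαF, hne⟩
  have hle (g : ℤ → ℤ) : ∑ α ∈ m.support, max (g (m α)) 0 ≤ ∑ α ∈ F, max (g (c α)) 0 := by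
    have hmF : m.support ⊆ F := (Finsupp.support_indicator_subset _ _).trans (F.erase_subset γ)
    refine (Finset.sum_congr rfl fun α hα ↦ ?_).trans_le
      (Finset.sum_le_sum_of_subset_of_nonneg hmF fun _ _ _ ↦ le_max_right _ _)
    rw [Finsupp.indicator_of_mem (Finsupp.support_indicator_subset _ _ hα)]
  have hsum : ∑ α ∈ m.support, m α • (α - γ) = ∑ α ∈ F, c α • (α - γ) := by
    rw [← F.sum_erase (a := γ) (by simp)]
    exact Finsupp.sum_indicator_index (h := fun α z ↦ z • (α - γ)) c fun _ _ ↦ zero_smul _ _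
  exact ⟨⟨add_sum_smul_sub_mem_cosetGen hγ hF c, hNN⟩, γ, hγ, m, hm, by rw [hsum],
    (hle id).trans hpos, (hle Neg.neg).trans hneg⟩

theorem sum_sub_sum_mem_Eext {A B : Multiset (Fin d → ℤ)} (hA : ∀ a ∈ A, a ∈ G)
    (hB : ∀ b ∈ B, b ∈ G) (hcard : A.card = B.card + 1) (hn : B.card ≤ n)
    (hNN : A.sum - B.sum ∈ NN d) : A.sum - B.sum ∈ Eext n G := by
  obtain ⟨γ, hγ⟩ := Multiset.card_pos_iff_exists_mem.1 (show 0 < A.card by omega)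
  obtain ⟨A, rfl⟩ := Multiset.exists_cons_of_mem hγ
  have hAB : A.card = B.card := by simpa using hcard
  have hAF : A.toFinset ⊆ (A + B).toFinset := by simp
  have hBF : B.toFinset ⊆ (A + B).toFinset := by simp
  have hF : ↑(A + B).toFinset ⊆ G := fun α hα ↦
    (Multiset.mem_add.1 (Multiset.mem_toFinset.1 hα)).elim
      (fun h ↦ hA α (Multiset.mem_cons_of_mem h)) (hB α)
  have hsum : (γ ::ₘ A).sum - B.sum =
      γ + ∑ α ∈ (A + B).toFinset, ((A.count α : ℤ) - B.count α) • (α - γ) := by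
    rw [sum_count_sub_count_smul_sub hAF hBF hAB, Multiset.sum_cons, add_sub_assoc]
  rw [hsum] at hNN ⊢
  refine add_sum_smul_sub_mem_Eext (hA γ hγ) hF _ hNN ?_ ?_
  · exact (sum_max_count_sub_count_le hAF).trans (by exact_mod_cast hAB.trans_le hn)
  · simp only [neg_sub]
    exact (sum_max_count_sub_count_le hBF).trans (by exact_mod_cast hn)

theorem subset_Eext (hG : G ⊆ NN d) : G ⊆ Eext n G := fun x hx ↦ by
  simpa using sum_sub_sum_mem_Eext (n := n) (A := {x}) (B := 0) (by simpa) (by simp) (by simp)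
    (by simp) (by simpa using hG hx)

theorem EextIter_subset_NN (k : ℕ) : EextIter n k G ⊆ NN d := by
  cases k <;> exact fun x hx ↦ hx.1.2

theorem monotone_EextIter (n : ℕ) (G : Set (Fin d → ℤ)) : Monotone fun k ↦ EextIter n k G :=
  monotone_nat_of_le_succ fun k ↦ subset_Eext (EextIter_subset_NN k)

theorem subset_EextInf (hG : G ⊆ NN d) : G ⊆ EextInf n G :=
  (subset_Eext hG).trans (Set.subset_iUnion (fun k ↦ EextIter n k G) 0)

theorem EextInf_subset_NN : EextInf n G ⊆ NN d :=
  Set.iUnion_subset EextIter_subset_NN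

theorem mergeClosed_EextInf (n : ℕ) (G : Set (Fin d → ℤ)) : MergeClosed n (EextInf n G) := by
  intro A B hA hB hcard hn hle
  have hAB : ↑(A + B).toFinset ⊆ EextInf n G := fun x hx ↦
    (Multiset.mem_add.1 (Multiset.mem_toFinset.1 hx)).elim (hA x) (hB x)
  obtain ⟨k, hk⟩ :=
    (monotone_EextIter n G).directed_le.exists_mem_subset_of_finset_subset_biUnion hAB
  refine Set.mem_iUnion.2 ⟨k + 1, sum_sub_sum_mem_Eext (fun a ha ↦ hk ?_) (fun b hb ↦ hk ?_)
    hcard hn (mem_NN_iff.2 (sub_nonneg.2 hle))⟩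
  · exact Multiset.mem_toFinset.2 (Multiset.mem_add.2 (Or.inl ha))
  · exact Multiset.mem_toFinset.2 (Multiset.mem_add.2 (Or.inr hb))

theorem add_mem_EextInf {G : Set (Fin 3 → ℤ)} (hG : G ⊆ NN 3) {α v : Fin 3 → ℤ} (hα : α ∈ G)
    (hv : v ∈ AddSubgroup.closure (G - G)) (hv0 : 0 ≤ v) : α + v ∈ EextInf 2 G := by
  have hsub : G ⊆ EextInf 2 G := subset_EextInf hG
  exact (mergeClosed_EextInf 2 G).add_mem (fun x hx ↦ EextInf_subset_NN hx) (hsub hα)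
    (AddSubgroup.closure_mono (Set.sub_subset_sub hsub hsub) hv) hv0

end Completion

section PositiveCombination

/- The product of `det A • (1, …, 1)` with the adjugate of `A` gives the coefficients of
`det A ^ 2 • (1, …, 1)` in terms of the rows of `A`. -/
theorem exists_pos_mem_closure {ι : Type*} [Finite ι] {S : Set (ι → ℤ)} {u : ι → ι → ℤ}
    (huS : ∀ i, u i ∈ S) (hu : LinearIndependent ℚ fun i j ↦ (u i j : ℚ)) :
    ∃ v ∈ AddSubgroup.closure S, ∀ j, 0 < v j := by
  cases nonempty_fintype ι
  let A : Matrix ι ι ℤ := Matrix.of u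
  have hdet : A.det ≠ 0 := by
    have hunit : IsUnit (A.map (Int.castRingHom ℚ)) := Matrix.linearIndependent_rows_iff_isUnit.1 hu
    rw [Matrix.isUnit_iff_isUnit_det, ← RingHom.mapMatrix_apply, ← RingHom.map_det,
      isUnit_iff_ne_zero] at hunit
    exact fun h ↦ hunit (by simp [h])
  let w : ι → ℤ := Matrix.vecMul (fun _ ↦ A.det) A.adjugate
  have hw : Matrix.vecMul w A = fun _ ↦ A.det * A.det := by
    rw [Matrix.vecMul_vecMul, Matrix.adjugate_mul, Matrix.vecMul_smul, Matrix.vecMul_one]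
    rfl
  refine ⟨Matrix.vecMul w A, ?_, fun j ↦ ?_⟩
  · rw [Matrix.vecMul_eq_sum]
    exact sum_mem fun i _ ↦ zsmul_mem (AddSubgroup.subset_closure (huS i)) _
  · rw [hw]
    exact mul_self_pos.2 hdet

end PositiveCombination

/-- For four affinely independent points in `ℕ₀³` and every `α ∈ T`, there is
`β ∈ E_2^∞(T)`, `β ≠ α`, with all three coordinates of `β - α` positive. -/
theorem positive_point_dim_three (t₀ t₁ t₂ t₃ : Fin 3 → ℤ)
    (h₀ : t₀ ∈ NN 3) (h₁ : t₁ ∈ NN 3) (h₂ : t₂ ∈ NN 3) (h₃ : t₃ ∈ NN 3)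
    (hind : LinearIndependent ℚ
      ![fun j => ((t₁ - t₀) j : ℚ), fun j => ((t₂ - t₀) j : ℚ),
        fun j => ((t₃ - t₀) j : ℚ)]) :
    ∀ α ∈ ({t₀, t₁, t₂, t₃} : Set (Fin 3 → ℤ)),
      ∃ β ∈ EextInf 2 ({t₀, t₁, t₂, t₃} : Set (Fin 3 → ℤ)),
        β ≠ α ∧ ∀ j, 0 < (β - α) j := by
  intro α hα
  have hT : ({t₀, t₁, t₂, t₃} : Set (Fin 3 → ℤ)) ⊆ NN 3 := by
    simp [Set.insert_subset_iff, h₀, h₁, h₂, h₃]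
  let u : Fin 3 → Fin 3 → ℤ := ![t₁ - t₀, t₂ - t₀, t₃ - t₀]
  have hu : LinearIndependent ℚ fun i j ↦ (u i j : ℚ) := by
    convert hind with i
    fin_cases i <;> rfl
  have huT (i : Fin 3) : u i ∈ ({t₀, t₁, t₂, t₃} - {t₀, t₁, t₂, t₃} : Set (Fin 3 → ℤ)) := by
    fin_cases i <;> exact Set.sub_mem_sub (by simp) (by simp)
  obtain ⟨v, hv, hpos⟩ := exists_pos_mem_closure huT hu
  refine ⟨α + v, add_mem_EextInf hT hα hv fun j ↦ (hpos j).le, fun h ↦ (hpos 0).ne' ?_, ?_⟩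
  · rw [add_eq_left.1 h, Pi.zero_apply]
  · simpa using hpos

end
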